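/- A graph G is a 3-leaf power if and only if G contains no induced bull, dart, gem, or chordless cycle of length at least 4. -/

import Mathlib

open SimpleGraph

/-- `b` is a leaf of `T`: it has at most one neighbour. -/
def IsTreeLeaf {β : Type} (T : SimpleGraph β) (b : β) : Prop :=
  ∀ c d, T.Adj b c → T.Adj b d → c = d

/-- `G` is a `k`-leaf power: there is a tree `T` whose set of leaves is exactly the
(injective) image of the vertex set of `G`, with two vertices adjacent in `G` iff the
corresponding leaves are at distance at most `k` in `T`. -/
def IsKLeafPower {V : Type} (k : ℕ) (G : SimpleGraph V) : Prop :=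
  ∃ (β : Type) (T : SimpleGraph β) (f : V → β), T.IsTree ∧ Function.Injective f ∧
    (∀ b, IsTreeLeaf T b ↔ b ∈ Set.range f) ∧
    (∀ u v, G.Adj u v ↔ (u ≠ v ∧ T.dist (f u) (f v) ≤ k))

/-- The bull: a triangle `0,1,2` with pendant vertices `3` (on `1`) and `4` (on `2`). -/
def bull : SimpleGraph (Fin 5) :=
  SimpleGraph.fromRel (fun a b => (a, b) ∈ ([(0,1),(0,2),(1,2),(1,3),(2,4)] : List (Fin 5 × Fin 5)))

/-- The dart: a diamond `0,1,2,3` (missing edge `(0,1)`) plus a pendant vertex `4`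
adjacent to the degree-3 vertex `2`. -/
def dart : SimpleGraph (Fin 5) :=
  SimpleGraph.fromRel (fun a b => (a, b) ∈ ([(0,2),(0,3),(1,2),(1,3),(2,3),(2,4)] : List (Fin 5 × Fin 5)))

/-- The gem: a path `0-1-2-3` plus a dominating vertex `4`. -/
def gem : SimpleGraph (Fin 5) :=
  SimpleGraph.fromRel (fun a b => (a, b) ∈ ([(0,1),(1,2),(2,3),(0,4),(1,4),(2,4),(3,4)] : List (Fin 5 × Fin 5)))

/-- A graph is a 3-leaf power iff it is {bull, dart, gem, chordless `C≥4`}-free. -/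
def Is3LeafPower {V : Type*} (H : SimpleGraph V) : Prop :=
  IsEmpty (bull ↪g H) ∧ IsEmpty (dart ↪g H) ∧ IsEmpty (gem ↪g H) ∧
    ∀ n, 4 ≤ n → IsEmpty (SimpleGraph.cycleGraph n ↪g H)

/-!
Write `u ≃ v` for "equal or adjacent". A leaf has a single neighbour, so `G` is a 3-leaf power iff
there are a tree `T` and a map `g : V(G) → V(T)` with `u ≃ v ↔ g u ≃ g v`; that is, iff `G` arises
from a tree, or equivalently from a forest, by substituting possibly empty cliques for its vertices.
Such a `g` is injective on every induced subgraph of `G` without true twins, so these subgraphs are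
acyclic. The bull, the dart, the gem and the cycles of length at least four have no true twins and
are not acyclic, hence do not occur.

Conversely, identifying true twins represents any `G` as a clique substitution of its critical
clique graph, an induced subgraph of `G` without true twins. If it contained a cycle, a shortest one
would be an induced cycle of `G`, hence a triangle. Its vertices are not twins, so two different
vertices of the triangle are each separated from the other two by some vertex, and the five vertices
involved contain a bull, dart, gem or `C₄`.
-/

section ClosedAdjacency

variable {V W X : Type*} {G : SimpleGraph V} {F : SimpleGraph W} {H : SimpleGraph X}

/-- Reflexive adjacency. The predicate `ClosedAdj G v` is the closed neighbourhood of `v`, so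
`u` and `v` are true twins iff `ClosedAdj G u = ClosedAdj G v`. -/
def ClosedAdj (G : SimpleGraph V) (u v : V) : Prop := u = v ∨ G.Adj u v

@[refl, simp]
theorem ClosedAdj.refl (v : V) : ClosedAdj G v v := Or.inl rfl

theorem closedAdj_comm {u v : V} : ClosedAdj G u v ↔ ClosedAdj G v u := by
  simp only [ClosedAdj, eq_comm, G.adj_comm]

theorem closedAdj_iff_adj {u v : V} (h : u ≠ v) : ClosedAdj G u v ↔ G.Adj u v :=
  or_iff_right h

theorem adj_iff_ne_and_closedAdj {u v : V} : G.Adj u v ↔ u ≠ v ∧ ClosedAdj G u v :=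
  ⟨fun h => ⟨h.ne, Or.inr h⟩, fun h => h.2.resolve_left h.1⟩

/-- A graph is twin-free if it has no two distinct vertices with the same closed neighbourhood. -/
def IsTwinFree (G : SimpleGraph V) : Prop := Function.Injective (ClosedAdj G)

theorem isTwinFree_iff :
    IsTwinFree G ↔ ∀ u v, (∀ w, ClosedAdj G u w ↔ ClosedAdj G v w) → u = v := by
  simp only [IsTwinFree, Function.Injective, funext_iff, eq_iff_iff]

/-- `G` arises from `F` by substituting for each vertex `k` the possibly empty clique `g ⁻¹' {k}`:
distinct vertices of `G` are adjacent iff `g` sends them to the same or to adjacent vertices. -/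
def IsCliqueSubstitution (G : SimpleGraph V) (F : SimpleGraph W) (g : V → W) : Prop :=
  ∀ u v, ClosedAdj G u v ↔ ClosedAdj F (g u) (g v)

theorem isCliqueSubstitution_embedding (e : G ↪g F) : IsCliqueSubstitution G F e := fun _ _ =>
  or_congr e.injective.eq_iff.symm e.map_adj_iff.symm

theorem IsCliqueSubstitution.trans {g : V → W} {f : W → X} (hg : IsCliqueSubstitution G F g)
    (hf : IsCliqueSubstitution F H f) : IsCliqueSubstitution G H (f ∘ g) := fun _ _ =>
  (hg _ _).trans (hf _ _)

theorem isCliqueSubstitution_of_forall_lt [LinearOrder V] {g : V → W}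
    (h : ∀ u v, u < v → (G.Adj u v ↔ ClosedAdj F (g u) (g v))) :
    IsCliqueSubstitution G F g := by
  have of_lt {u v : V} (huv : u < v) : ClosedAdj G u v ↔ ClosedAdj F (g u) (g v) :=
    (closedAdj_iff_adj huv.ne).trans (h u v huv)
  intro u v
  rcases lt_trichotomy u v with huv | rfl | hvu
  · exact of_lt huv
  · simp
  · rw [closedAdj_comm, of_lt hvu, closedAdj_comm]

theorem IsTwinFree.injective {g : V → W} (hG : IsTwinFree G) (h : IsCliqueSubstitution G F g) :
    Function.Injective g := fun u v huv =>
  hG <| funext fun w => propext <| by rw [h, huv, ← h]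

theorem IsTwinFree.isIndContained {g : V → W} (hG : IsTwinFree G)
    (h : IsCliqueSubstitution G F g) : G ⊴ F := by
  have hg := hG.injective h
  refine ⟨⟨⟨g, hg⟩, fun {u v} => ?_⟩⟩
  simp only [Function.Embedding.coeFn_mk, adj_iff_ne_and_closedAdj, h u v, hg.ne_iff]

theorem IsCliqueSubstitution.isAcyclic_of_isTwinFree {g : V → W} (h : IsCliqueSubstitution G F g)
    (hF : F.IsAcyclic) (hH : IsTwinFree H) (hHG : H ⊴ G) : H.IsAcyclic := by
  obtain ⟨e⟩ := hHG
  obtain ⟨e'⟩ := hH.isIndContained ((isCliqueSubstitution_embedding e).trans h)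
  exact hF.embedding e'

theorem dist_le_three_iff_closedAdj (hG : G.Connected) {a b p q : V}
    (ha : ∀ c, G.Adj a c ↔ c = p) (hb : ∀ c, G.Adj b c ↔ c = q) :
    G.dist a b ≤ 3 ↔ ClosedAdj G p q := by
  have hap : G.Adj a p := (ha p).2 rfl
  have hbq : G.Adj b q := (hb q).2 rfl
  constructor
  · intro h
    obtain ⟨w, hw⟩ := hG.exists_walk_length_eq_dist a b
    rw [← hw] at h
    match w, h with
    | .nil, _ => exact .inl ((hb p).1 hap)
    | .cons hab .nil, _ =>
      rw [← (ha b).1 hab, ← (hb a).1 hab.symm]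
      exact .inr hab.symm
    | .cons hac (.cons hcb .nil), _ =>
      exact .inl (((ha _).1 hac).symm.trans ((hb _).1 hcb.symm))
    | .cons hac (.cons hcd (.cons hdb .nil)), _ =>
      rw [← (ha _).1 hac, ← (hb _).1 hdb.symm]
      exact .inr hcd
    | .cons _ (.cons _ (.cons _ (.cons _ _))), h =>
      simp only [Walk.length_cons] at h
      omega
  · rintro (rfl | hpq)
    · exact (dist_le (.cons hap (.cons hbq.symm .nil))).trans (by simp)
    · exact (dist_le (.cons hap (.cons hpq (.cons hbq.symm .nil)))).trans (by simp)

end ClosedAdjacency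

section Cycles

variable {V : Type*} {G : SimpleGraph V}

theorem cycleGraph_adj_iff_of_lt {n : ℕ} {i j : Fin n} (hij : i < j) :
    (cycleGraph n).Adj i j ↔ i.val + 1 = j.val ∨ i.val = 0 ∧ j.val + 1 = n := by
  rw [cycleGraph_adj', Fin.coe_sub_iff_lt.2 hij, Fin.sub_val_of_le hij.le]
  have : i.val < j.val := hij
  omega

theorem isTwinFree_cycleGraph {n : ℕ} (hn : 4 ≤ n) : IsTwinFree (cycleGraph n) := by
  rw [isTwinFree_iff]
  intro i j h
  by_contra hne
  wlog hij : i < j generalizing i j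
  · exact this j i (fun w => (h w).symm) (Ne.symm hne) (lt_of_le_of_ne' (not_lt.1 hij) hne)
  have closedAdj_of_lt {k l : Fin n} (hkl : k.val < l.val) : ClosedAdj (cycleGraph n) k l ↔
      k.val + 1 = l.val ∨ k.val = 0 ∧ l.val + 1 = n :=
    (closedAdj_iff_adj (Fin.ne_of_lt hkl)).trans (cycleGraph_adj_iff_of_lt hkl)
  have : i.val < j.val := hij
  -- In each case test `h` on a vertex next to exactly one of `i` and `j`.
  rcases (closedAdj_of_lt hij).1 ((h j).2 (.refl j)) with hj | ⟨hi, hj⟩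
  · rcases Nat.eq_zero_or_pos i.val with hi | hi
    · have hlast := h ⟨n - 1, by omega⟩
      rw [closedAdj_of_lt (by dsimp only; omega), closedAdj_of_lt (by dsimp only; omega)] at hlast
      dsimp only at hlast
      omega
    · have hpred := h ⟨i.val - 1, by omega⟩
      rw [closedAdj_comm, closedAdj_of_lt (by dsimp only; omega),
        closedAdj_comm, closedAdj_of_lt (by dsimp only; omega)] at hpred
      dsimp only at hpred
      omega
  · have hone := h ⟨1, by omega⟩
    rw [closedAdj_of_lt (by dsimp only; omega),
      closedAdj_comm, closedAdj_of_lt (by dsimp only; omega)] at hone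
    dsimp only at hone
    omega

theorem not_isAcyclic_cycleGraph {n : ℕ} (hn : 3 ≤ n) : ¬ (cycleGraph n).IsAcyclic := fun h =>
  isAcyclic_iff_free_cycleGraph.1 h n hn (IsContained.refl _)

theorem girth_le_of_cycleGraph_isContained {n : ℕ} (hn : 3 ≤ n) (h : cycleGraph n ⊑ G) :
    G.girth ≤ n := by
  obtain ⟨v, c, hc, rfl⟩ := (cycleGraph_isContained_iff hn).1 h
  exact girth_le_length hc

theorem cycleGraph_girth_isContained (hG : ¬ G.IsAcyclic) : cycleGraph G.girth ⊑ G := by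
  obtain ⟨v, c, hc, hlen⟩ := exists_girth_eq_length.2 hG
  exact (cycleGraph_isContained_iff (three_le_girth hG)).2 ⟨v, c, hc, hlen.symm⟩

theorem cycleGraph_isContained_of_chord {n : ℕ} (f : Copy (cycleGraph n) G) {i j : Fin n}
    (hij : i < j) (h : G.Adj (f i) (f j)) : cycleGraph (j.val - i.val + 1) ⊑ G := by
  let arc (k : Fin (j.val - i.val + 1)) : Fin n := ⟨i.val + k.val, by omega⟩
  have arc_injective : Function.Injective arc := fun k l hkl => by
    simpa [arc, Fin.ext_iff] using hkl
  have adj_of_lt {k l : Fin (j.val - i.val + 1)} (hkl : k < l)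
      (hadj : (cycleGraph (j.val - i.val + 1)).Adj k l) : G.Adj (f (arc k)) (f (arc l)) := by
    rcases (cycleGraph_adj_iff_of_lt hkl).1 hadj with hsucc | ⟨hk, hl⟩
    · refine f.toHom.map_adj ((cycleGraph_adj_iff_of_lt ?_).2 (Or.inl ?_)) <;>
        simp only [arc, Fin.mk_lt_mk] <;> omega
    · have hki : arc k = i := Fin.ext (by simp only [arc]; omega)
      have hlj : arc l = j := Fin.ext (by simp only [arc]; omega)
      rwa [hki, hlj]
  refine ⟨⟨⟨f ∘ arc, fun {k l} hadj => ?_⟩, f.injective.comp arc_injective⟩⟩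
  rcases hadj.ne.lt_or_gt with hkl | hlk
  · exact adj_of_lt hkl hadj
  · exact (adj_of_lt hlk hadj.symm).symm

theorem cycleGraph_girth_isIndContained (hG : ¬ G.IsAcyclic) : cycleGraph G.girth ⊴ G := by
  obtain ⟨f⟩ := cycleGraph_girth_isContained hG
  have adj_of_lt {i j : Fin G.girth} (hij : i < j) (h : G.Adj (f i) (f j)) :
      (cycleGraph G.girth).Adj i j := by
    rw [cycleGraph_adj_iff_of_lt hij]
    have : i.val < j.val := hij
    by_contra! hchord
    have := girth_le_of_cycleGraph_isContained (by omega) (cycleGraph_isContained_of_chord f hij h)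
    omega
  refine ⟨⟨⟨f, f.injective⟩, fun {i j} => ⟨fun h => ?_, f.toHom.map_adj⟩⟩⟩
  rcases lt_trichotomy i j with hij | rfl | hji
  · exact adj_of_lt hij h
  · exact absurd h G.irrefl
  · exact (adj_of_lt hji h.symm).symm

theorem isAcyclic_of_cliqueFree_of_forall_cycleGraph (h₃ : G.CliqueFree 3)
    (h : ∀ n, 4 ≤ n → IsEmpty (cycleGraph n ↪g G)) : G.IsAcyclic := by
  by_contra hG
  have hind := cycleGraph_girth_isIndContained hG
  rcases (three_le_girth hG).eq_or_lt with heq | hlt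
  · rw [← heq, cycleGraph_three_eq_top] at hind
    exact (not_cliqueFree_iff_top_isContained 3).2 hind.isContained h₃
  · exact not_nonempty_iff.2 (h _ hlt) hind

end Cycles

section Obstructions

variable {V W : Type*} {G : SimpleGraph V} {F : SimpleGraph W} {g : V → W}

theorem isTwinFree_bull : IsTwinFree bull := by
  simp [isTwinFree_iff, Fin.forall_fin_succ, ClosedAdj, bull]

theorem isTwinFree_dart : IsTwinFree dart := by
  simp [isTwinFree_iff, Fin.forall_fin_succ, ClosedAdj, dart]

theorem isTwinFree_gem : IsTwinFree gem := by
  simp [isTwinFree_iff, Fin.forall_fin_succ, ClosedAdj, gem]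

theorem not_isAcyclic_bull : ¬ bull.IsAcyclic := fun h =>
  h.cliqueFree le_rfl {0, 1, 2} (is3Clique_triple_iff.2 (by simp [bull]))

theorem not_isAcyclic_dart : ¬ dart.IsAcyclic := fun h =>
  h.cliqueFree le_rfl {0, 2, 3} (is3Clique_triple_iff.2 (by simp [dart]))

theorem not_isAcyclic_gem : ¬ gem.IsAcyclic := fun h =>
  h.cliqueFree le_rfl {0, 1, 4} (is3Clique_triple_iff.2 (by simp [gem]))

theorem IsCliqueSubstitution.is3LeafPower (h : IsCliqueSubstitution G F g) (hF : F.IsAcyclic) :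
    Is3LeafPower G := by
  have isEmpty_embedding {X : Type} {H : SimpleGraph X} (hH : IsTwinFree H)
      (hcyc : ¬ H.IsAcyclic) : IsEmpty (H ↪g G) :=
    ⟨fun e => hcyc (h.isAcyclic_of_isTwinFree hF hH ⟨e⟩)⟩
  exact ⟨isEmpty_embedding isTwinFree_bull not_isAcyclic_bull,
    isEmpty_embedding isTwinFree_dart not_isAcyclic_dart,
    isEmpty_embedding isTwinFree_gem not_isAcyclic_gem,
    fun n hn => isEmpty_embedding (isTwinFree_cycleGraph hn)
      (not_isAcyclic_cycleGraph (by omega))⟩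

end Obstructions

section Triangles

variable {V W : Type*} {G : SimpleGraph V} {F : SimpleGraph W}

theorem Is3LeafPower.of_embedding (hG : Is3LeafPower G) (e : F ↪g G) : Is3LeafPower F :=
  ⟨⟨fun f => hG.1.false (e.comp f)⟩, ⟨fun f => hG.2.1.false (e.comp f)⟩,
    ⟨fun f => hG.2.2.1.false (e.comp f)⟩, fun n hn => ⟨fun f => (hG.2.2.2 n hn).false (e.comp f)⟩⟩

/-- `x` separates `a` from `b` and `c`: the closed neighbourhood of `x` contains either `a` but not
`b` and `c`, or `b` and `c` but not `a`. -/
def Separates (G : SimpleGraph V) (x a b c : V) : Prop :=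
  ClosedAdj G a x ∧ ¬ ClosedAdj G b x ∧ ¬ ClosedAdj G c x ∨
    ¬ ClosedAdj G a x ∧ ClosedAdj G b x ∧ ClosedAdj G c x

theorem Separates.swap {x a b c : V} (h : Separates G x a b c) : Separates G x a c b :=
  h.imp (.imp_right And.symm) (.imp_right And.symm)

theorem IsTwinFree.exists_separates (hG : IsTwinFree G) {a b : V} (hab : a ≠ b) (c : V) :
    ∃ x, Separates G x a b c ∨ Separates G x b a c := by
  by_contra! h
  refine hab (isTwinFree_iff.1 hG a b fun x => ?_)
  have := h x
  grind [Separates]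

theorem Is3LeafPower.not_separates_of_separates (hG : Is3LeafPower G) {a b c x y : V}
    (hab : G.Adj a b) (hac : G.Adj a c) (hbc : G.Adj b c) (hx : Separates G x a b c) :
    ¬ Separates G y b a c := by
  intro hy
  obtain ⟨hbull, hdart, hgem, hcycle⟩ := hG
  have false_of_forall_lt {n : ℕ} {H : SimpleGraph (Fin n)} (hfree : IsEmpty (H ↪g G))
      (hH : IsTwinFree H) (f : Fin n → V)
      (hf : ∀ i j, i < j → (H.Adj i j ↔ ClosedAdj G (f i) (f j))) : False :=
    (hH.isIndContained (isCliqueSubstitution_of_forall_lt hf)).elim hfree.false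
  replace hab : ClosedAdj G a b := Or.inr hab
  replace hac : ClosedAdj G a c := Or.inr hac
  replace hbc : ClosedAdj G b c := Or.inr hbc
  rcases hx with ⟨hax, hbx, hcx⟩ | ⟨hax, hbx, hcx⟩ <;>
    rcases hy with ⟨hby, hay, hcy⟩ | ⟨hby, hay, hcy⟩ <;>
    by_cases hxy : ClosedAdj G x y
  · refine false_of_forall_lt (hcycle 4 le_rfl) (isTwinFree_cycleGraph le_rfl) ![x, a, b, y] ?_
    simp +decide [Fin.forall_fin_succ, cycleGraph_adj, closedAdj_comm, *]
  · refine false_of_forall_lt hbull isTwinFree_bull ![c, a, b, x, y] ?_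
    simp [Fin.forall_fin_succ, bull, closedAdj_comm, *]
  · refine false_of_forall_lt hgem isTwinFree_gem ![x, y, c, b, a] ?_
    simp [Fin.forall_fin_succ, gem, closedAdj_comm, *]
  · refine false_of_forall_lt hdart isTwinFree_dart ![y, b, a, c, x] ?_
    simp [Fin.forall_fin_succ, dart, closedAdj_comm, *]
  · refine false_of_forall_lt hgem isTwinFree_gem ![y, x, c, a, b] ?_
    simp [Fin.forall_fin_succ, gem, closedAdj_comm, *]
  · refine false_of_forall_lt hdart isTwinFree_dart ![x, a, b, c, y] ?_
    simp [Fin.forall_fin_succ, dart, closedAdj_comm, *]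
  · refine false_of_forall_lt (hcycle 4 le_rfl) (isTwinFree_cycleGraph le_rfl) ![x, y, a, b] ?_
    simp +decide [Fin.forall_fin_succ, cycleGraph_adj, closedAdj_comm, *]
  · refine false_of_forall_lt hgem isTwinFree_gem ![x, b, a, y, c] ?_
    simp [Fin.forall_fin_succ, gem, closedAdj_comm, *]

theorem Is3LeafPower.cliqueFree_three (hG : Is3LeafPower G) (hfree : IsTwinFree G) :
    G.CliqueFree 3 := by
  classical
  intro s hs
  obtain ⟨a, b, c, hab, hac, hbc, -⟩ := is3Clique_iff.1 hs
  obtain ⟨x, hx⟩ := hfree.exists_separates hab.ne c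
  wlog hxa : Separates G x a b c generalizing a b
  · exact this b a hab.symm hbc hac hx.symm (hx.resolve_left hxa)
  obtain ⟨y, hy | hy⟩ := hfree.exists_separates hbc.ne a
  · exact hG.not_separates_of_separates hab hac hbc hxa hy.swap
  · exact hG.not_separates_of_separates hac hab hbc.symm hxa.swap hy.swap

theorem Is3LeafPower.isAcyclic_of_isTwinFree (hG : Is3LeafPower G) (hfree : IsTwinFree G) :
    G.IsAcyclic :=
  isAcyclic_of_cliqueFree_of_forall_cycleGraph (hG.cliqueFree_three hfree) hG.2.2.2

end Triangles

section CriticalCliques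

variable {V : Type*} {G : SimpleGraph V}

/-- The critical clique graph of `G`, whose vertices are the classes of true twins; two classes are
adjacent iff their representatives are. -/
noncomputable def criticalCliqueGraph (G : SimpleGraph V) :
    SimpleGraph (Quotient (Setoid.ker (ClosedAdj G))) :=
  G.comap Quotient.out

/-- The critical clique graph as an induced subgraph, given by the representatives. -/
noncomputable def criticalCliqueGraphEmbedding (G : SimpleGraph V) : criticalCliqueGraph G ↪g G :=
  Embedding.comap ⟨Quotient.out, Quotient.out_injective⟩ G

theorem isCliqueSubstitution_criticalCliqueGraph :
    IsCliqueSubstitution G (criticalCliqueGraph G) (Quotient.mk _) := fun u v => by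
  have closedAdj_out (w : V) : ClosedAdj G (Quotient.mk (Setoid.ker (ClosedAdj G)) w).out =
      ClosedAdj G w := Quotient.mk_out (s := Setoid.ker (ClosedAdj G)) w
  rw [isCliqueSubstitution_embedding (criticalCliqueGraphEmbedding G)]
  change _ ↔ ClosedAdj G (Quotient.out _) (Quotient.out _)
  rw [closedAdj_out, closedAdj_comm (u := u) (v := Quotient.out _), closedAdj_out, closedAdj_comm]

theorem isTwinFree_criticalCliqueGraph : IsTwinFree (criticalCliqueGraph G) := by
  rintro ⟨u⟩ ⟨v⟩ h
  refine Quotient.sound (funext fun w => propext ?_)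
  exact (isCliqueSubstitution_criticalCliqueGraph u w).trans <|
    (iff_of_eq (congrFun h _)).trans (isCliqueSubstitution_criticalCliqueGraph v w).symm

theorem Is3LeafPower.isAcyclic_criticalCliqueGraph (hG : Is3LeafPower G) :
    (criticalCliqueGraph G).IsAcyclic :=
  (hG.of_embedding (criticalCliqueGraphEmbedding G)).isAcyclic_of_isTwinFree
    isTwinFree_criticalCliqueGraph

end CriticalCliques

section Cuts

variable {V W : Type*} {G : SimpleGraph V} {S : Set V} {a b : V}

/-- `S` is a cut of `G` crossed by exactly one edge, leading from `a ∈ S` to `b ∉ S`. -/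
structure IsSingleEdgeCut (G : SimpleGraph V) (S : Set V) (a b : V) : Prop where
  left_mem : a ∈ S
  right_notMem : b ∉ S
  eq_of_adj : ∀ x ∈ S, ∀ y ∉ S, G.Adj x y → x = a ∧ y = b

theorem IsSingleEdgeCut.compl (h : IsSingleEdgeCut G S a b) : IsSingleEdgeCut G Sᶜ b a where
  left_mem := h.right_notMem
  right_notMem := not_not.2 h.left_mem
  eq_of_adj x hx y hy hxy := (h.eq_of_adj y (not_not.1 hy) x hx hxy.symm).symm

theorem IsSingleEdgeCut.isBridge (h : IsSingleEdgeCut G S a b) : G.IsBridge s(a, b) := by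
  rw [isBridge_iff]
  rintro ⟨w⟩
  obtain ⟨d, -, hfst, hsnd⟩ := w.exists_boundary_dart S h.left_mem h.right_notMem
  have hd := (deleteEdges_adj ..).1 d.adj
  obtain ⟨hda, hdb⟩ := h.eq_of_adj _ hfst _ hsnd hd.1
  exact hd.2 (by simp [hda, hdb])

theorem exists_isSingleEdgeCut_of_isBridge (h : G.IsBridge s(a, b)) :
    ∃ S, IsSingleEdgeCut G S a b := by
  rw [isBridge_iff] at h
  refine ⟨{x | (G.deleteEdges {s(a, b)}).Reachable a x}, .refl a, h, fun x hx y hy hxy => ?_⟩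
  have hedge : s(x, y) = s(a, b) := by
    by_contra hne
    exact hy (hx.trans (Adj.reachable ((deleteEdges_adj ..).2 ⟨hxy, hne⟩)))
  rcases Sym2.eq_iff.1 hedge with h' | ⟨rfl, rfl⟩
  · exact h'
  · exact absurd hx h

theorem isAcyclic_iff_exists_isSingleEdgeCut :
    G.IsAcyclic ↔ ∀ a b, G.Adj a b → ∃ S, IsSingleEdgeCut G S a b := by
  rw [isAcyclic_iff_forall_adj_isBridge]
  exact ⟨fun h a b hab => exists_isSingleEdgeCut_of_isBridge (h hab),
    fun h a b hab => (h a b hab).elim fun _ hS => hS.isBridge⟩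

theorem isAcyclic_map (hG : G.IsAcyclic) (e : V ↪ W) : (G.map e).IsAcyclic := by
  rw [isAcyclic_iff_exists_isSingleEdgeCut] at hG ⊢
  simp only [map_adj]
  rintro _ _ ⟨a, b, hab, rfl, rfl⟩
  obtain ⟨S, hS⟩ := hG a b hab
  refine ⟨e '' S, Set.mem_image_of_mem e hS.left_mem, by simpa using hS.right_notMem, ?_⟩
  rintro _ ⟨x, hx, rfl⟩ y hy hxy
  obtain ⟨x', y', hxy', hx', rfl⟩ := (map_adj ..).1 hxy
  obtain rfl := e.injective hx'
  obtain ⟨rfl, rfl⟩ := hS.eq_of_adj x' hx y' (fun h => hy ⟨y', h, rfl⟩) hxy'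
  exact ⟨rfl, rfl⟩

theorem exists_isTree_embedding_of_isAcyclic (hG : G.IsAcyclic) :
    ∃ T : SimpleGraph (Option V), T.IsTree ∧ Nonempty (G ↪g T) := by
  obtain ⟨T, hGT, hTG, hT⟩ :=
    ((connected_starGraph none).mono le_sup_right).exists_isTree_le_of_le_of_isAcyclic
      (le_sup_left : G.map Function.Embedding.some ≤ G.map Function.Embedding.some ⊔ starGraph none)
      (isAcyclic_map hG _)
  refine ⟨T, hT, ⟨⟨.some, fun {u v} => ⟨fun h => ?_, fun h => ?_⟩⟩⟩⟩
  · rcases (sup_adj ..).1 (hTG h) with hmap | hstar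
    · exact (map_adj_apply ..).1 hmap
    · simp at hstar
  · exact hGT ((map_adj_apply ..).2 h)

end Cuts

section LeafTree

variable {V W : Type*} {T : SimpleGraph W} {g : V → W}

/-- The oriented edges of `leafTree T g`, where `.inl v` is the pendant vertex of `v` and
`.inr (k, l)` is the node `l` of the binary tree at `k`. -/
inductive LeafTreeRel (T : SimpleGraph W) (g : V → W) :
    V ⊕ W × List Bool → V ⊕ W × List Bool → Prop
  | core {j k : W} : T.Adj j k → LeafTreeRel T g (.inr (j, [])) (.inr (k, []))
  | pendant (v : V) : LeafTreeRel T g (.inl v) (.inr (g v, []))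
  | child (k : W) (l : List Bool) (b : Bool) : LeafTreeRel T g (.inr (k, b :: l)) (.inr (k, l))

/-- The graph obtained from `T` by attaching a pendant vertex at `g v` for every `v`, and at every
vertex an infinite binary tree with nodes `List Bool` and root `[]`. Owing to the binary trees, only
the pendant vertices are leaves. -/
def leafTree (T : SimpleGraph W) (g : V → W) : SimpleGraph (V ⊕ W × List Bool) :=
  fromRel (LeafTreeRel T g)

theorem LeafTreeRel.adj {x y : V ⊕ W × List Bool} (h : LeafTreeRel T g x y) :
    (leafTree T g).Adj x y :=
  (fromRel_adj ..).2 ⟨by rintro rfl; cases h; simp_all, Or.inl h⟩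

theorem leafTree_adj {x y : V ⊕ W × List Bool} :
    (leafTree T g).Adj x y ↔ LeafTreeRel T g x y ∨ LeafTreeRel T g y x :=
  ⟨fun h => ((fromRel_adj ..).1 h).2, fun h => h.elim LeafTreeRel.adj fun h => h.adj.symm⟩

theorem leafTree_inl_adj_iff {v : V} {y : V ⊕ W × List Bool} :
    (leafTree T g).Adj (.inl v) y ↔ y = .inr (g v, []) := by
  refine ⟨fun h => ?_, fun h => h ▸ (LeafTreeRel.pendant v).adj⟩
  rcases leafTree_adj.1 h with h | h <;> cases h
  rfl

/-- `T` as an induced subgraph of `leafTree T g`. -/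
def leafTreeCore (T : SimpleGraph W) (g : V → W) : T ↪g leafTree T g where
  toFun k := .inr (k, [])
  inj' _ _ h := congrArg Prod.fst (Sum.inr_injective h)
  map_rel_iff' := by
    refine ⟨fun h => ?_, fun h => (LeafTreeRel.core h).adj⟩
    rcases leafTree_adj.1 h with h | h <;> cases h with
    | core hadj => simp only [hadj, hadj.symm]

theorem connected_leafTree (hT : T.Connected) : (leafTree T g).Connected := by
  have reachable_root (k : W) (l : List Bool) :
      (leafTree T g).Reachable (.inr (k, l)) (.inr (k, [])) := by
    induction l with
    | nil => exact .refl _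
    | cons b l ih => exact (LeafTreeRel.child k l b).adj.reachable.trans ih
  have reachable_core (x : V ⊕ W × List Bool) :
      ∃ k, (leafTree T g).Reachable x (.inr (k, [])) := by
    rcases x with v | ⟨k, l⟩
    · exact ⟨g v, (LeafTreeRel.pendant v).adj.reachable⟩
    · exact ⟨k, reachable_root k l⟩
  obtain ⟨k₀⟩ := hT.nonempty
  refine (connected_iff_exists_forall_reachable _).2 ⟨.inr (k₀, []), fun x => ?_⟩
  obtain ⟨k, hk⟩ := reachable_core x
  exact ((hT.preconnected k₀ k).map (leafTreeCore T g).toHom).trans hk.symm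

theorem IsSingleEdgeCut.leafTree_core {S : Set W} {j k : W} (h : IsSingleEdgeCut T S j k) :
    IsSingleEdgeCut (leafTree T g) (Sum.elim g Prod.fst ⁻¹' S) (.inr (j, [])) (.inr (k, [])) where
  left_mem := h.left_mem
  right_notMem := h.right_notMem
  eq_of_adj x hx y hy hxy := by
    have eq_of_adj {k₁ k₂ : W} (h₁ : k₁ ∈ S) (h₂ : k₂ ∉ S) (hadj : T.Adj k₁ k₂) :
        (.inr (k₁, []) : V ⊕ W × List Bool) = .inr (j, []) ∧
          (.inr (k₂, []) : V ⊕ W × List Bool) = .inr (k, []) := by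
      obtain ⟨rfl, rfl⟩ := h.eq_of_adj k₁ h₁ k₂ h₂ hadj
      exact ⟨rfl, rfl⟩
    rcases leafTree_adj.1 hxy with hrel | hrel <;> cases hrel
    case inl.core hadj => exact eq_of_adj hx hy hadj
    case inr.core hadj => exact eq_of_adj hx hy hadj.symm
    all_goals exact absurd hx hy

theorem isSingleEdgeCut_leafTree_pendant (v : V) :
    IsSingleEdgeCut (leafTree T g) {.inl v} (.inl v) (.inr (g v, [])) where
  left_mem := rfl
  right_notMem := by simp
  eq_of_adj := by
    rintro _ rfl y - hxy
    exact ⟨rfl, leafTree_inl_adj_iff.1 hxy⟩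

theorem isSingleEdgeCut_leafTree_child (k : W) (l : List Bool) (b : Bool) :
    IsSingleEdgeCut (leafTree T g) {x | ∃ l', b :: l <:+ l' ∧ x = .inr (k, l')}
      (.inr (k, b :: l)) (.inr (k, l)) where
  left_mem := ⟨_, List.suffix_rfl, rfl⟩
  right_notMem := by
    rintro ⟨l', hl, h⟩
    cases h
    exact absurd hl.length_le (by simp)
  eq_of_adj := by
    rintro _ ⟨l', hl, rfl⟩ y hy hxy
    rcases leafTree_adj.1 hxy with h | h
    · cases h with
      | core => simp at hl
      | child _ m c =>
        rcases List.suffix_cons_iff.1 hl with heq | hm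
        · cases heq
          exact ⟨rfl, rfl⟩
        · exact absurd ⟨m, hm, rfl⟩ hy
    · cases h with
      | core => simp at hl
      | pendant => simp at hl
      | child _ _ c => exact absurd ⟨_, hl.trans (List.suffix_cons c l'), rfl⟩ hy

theorem isAcyclic_leafTree (hT : T.IsAcyclic) : (leafTree T g).IsAcyclic := by
  have exists_cut {x y : V ⊕ W × List Bool} (h : LeafTreeRel T g x y) :
      ∃ S, IsSingleEdgeCut (leafTree T g) S x y := by
    cases h with
    | core h =>
      obtain ⟨S, hS⟩ := isAcyclic_iff_exists_isSingleEdgeCut.1 hT _ _ h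
      exact ⟨_, hS.leafTree_core⟩
    | pendant v => exact ⟨_, isSingleEdgeCut_leafTree_pendant v⟩
    | child k l b => exact ⟨_, isSingleEdgeCut_leafTree_child k l b⟩
  refine isAcyclic_iff_exists_isSingleEdgeCut.2 fun x y hxy => ?_
  rcases leafTree_adj.1 hxy with h | h
  · exact exists_cut h
  · obtain ⟨S, hS⟩ := exists_cut h
    exact ⟨Sᶜ, hS.compl⟩

theorem isTree_leafTree (hT : T.IsTree) : (leafTree T g).IsTree :=
  ⟨connected_leafTree hT.connected, isAcyclic_leafTree hT.isAcyclic⟩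

end LeafTree

section LeafPowers

variable {V W : Type} {G : SimpleGraph V} {T : SimpleGraph W}

theorem isTreeLeaf_leafTree_iff {g : V → W} {x : V ⊕ W × List Bool} :
    IsTreeLeaf (leafTree T g) x ↔ x ∈ Set.range Sum.inl := by
  constructor
  · intro h
    rcases x with v | ⟨k, l⟩
    · exact ⟨v, rfl⟩
    · have := h _ _ (LeafTreeRel.child k l true).adj.symm (LeafTreeRel.child k l false).adj.symm
      simp at this
  · rintro ⟨v, rfl⟩ c d hc hd
    rw [leafTree_inl_adj_iff.1 hc, leafTree_inl_adj_iff.1 hd]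

theorem IsCliqueSubstitution.isKLeafPower {g : V → W} (h : IsCliqueSubstitution G T g)
    (hT : T.IsTree) : IsKLeafPower 3 G := by
  refine ⟨_, leafTree T g, Sum.inl, isTree_leafTree hT, Sum.inl_injective,
    fun _ => isTreeLeaf_leafTree_iff, fun u v => ?_⟩
  have hT' : (leafTree T g).Connected := connected_leafTree hT.connected
  rw [adj_iff_ne_and_closedAdj, h u v, isCliqueSubstitution_embedding (leafTreeCore T g),
    dist_le_three_iff_closedAdj hT' (fun _ => leafTree_inl_adj_iff) fun _ => leafTree_inl_adj_iff]
  rfl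

theorem IsKLeafPower.exists_isCliqueSubstitution (h : IsKLeafPower 3 G) :
    ∃ (W : Type) (T : SimpleGraph W) (g : V → W), T.IsTree ∧ IsCliqueSubstitution G T g := by
  obtain ⟨W, T, f, hT, hf, hleaf, hadj⟩ := h
  refine ⟨W, T, ?_⟩
  rcases subsingleton_or_nontrivial W with hW | hW
  · exact ⟨f, hT, fun u v => by simp [hf (Subsingleton.elim (f u) (f v))]⟩
  choose g hg using fun v => hT.connected.preconnected.exists_adj_of_nontrivial (f v)
  have adj_iff (v : V) (c : W) : T.Adj (f v) c ↔ c = g v :=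
    ⟨fun hc => (hleaf _).2 ⟨v, rfl⟩ _ _ hc (hg v), fun hc => hc ▸ hg v⟩
  refine ⟨g, hT, fun u v => ?_⟩
  rw [← dist_le_three_iff_closedAdj hT.connected (adj_iff u) (adj_iff v), ClosedAdj, hadj]
  rcases eq_or_ne u v with rfl | huv <;> simp [*]

end LeafPowers

theorem threeLeafPower_iff_forbidden_free {V : Type} (G : SimpleGraph V) :
    IsKLeafPower 3 G ↔ Is3LeafPower G := by
  constructor
  · intro h
    obtain ⟨W, T, g, hT, hg⟩ := h.exists_isCliqueSubstitution
    exact hg.is3LeafPower hT.isAcyclic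
  · intro h
    obtain ⟨T, hT, ⟨e⟩⟩ := exists_isTree_embedding_of_isAcyclic h.isAcyclic_criticalCliqueGraph
    exact (isCliqueSubstitution_criticalCliqueGraph.trans
      (isCliqueSubstitution_embedding e)).isKLeafPower hT
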